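/- Let b ≥ 1/2 and let u₀ : (0,∞) → ℝ be bounded and continuous. With the Bessel heat kernel q_τ(z,ζ,b) = (√(zζ)/τ)·(ζ/z)^b·exp(−(z²+ζ²)/(2τ))·I_{b−1/2}(zζ/τ), one has, for every fixed z > 0, lim_{τ→0⁺} ∫_0^∞ u₀(ζ)·q_τ(z,ζ,b) dζ = u₀(z). -/

import Mathlib

/-- Modified Bessel function of the first kind,
`I_ν(x) = Σ_{k=0}^∞ (x/2)^{2k+ν}/(k!·Γ(k+ν+1))`. -/
noncomputable def besselI (ν x : ℝ) : ℝ :=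
  ∑' k : ℕ, (x / 2) ^ (2 * (k : ℝ) + ν) / ((Nat.factorial k : ℝ) * Real.Gamma ((k : ℝ) + ν + 1))

/-- Bessel heat kernel
`q_τ(z,ζ,b) = (√(zζ)/τ)·(ζ/z)^b·exp(−(z²+ζ²)/(2τ))·I_{b−1/2}(zζ/τ)`. -/
noncomputable def besselKernel (b s z ζ : ℝ) : ℝ :=
  Real.sqrt (z * ζ) / s * (ζ / z) ^ b * Real.exp (-(z ^ 2 + ζ ^ 2) / (2 * s)) *
    besselI (b - 1 / 2) (z * ζ / s)

open MeasureTheory in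
lemma aux_pow_identity (b τ z ζ : ℝ) (hτ : 0 < τ) (hz : 0 < z) (hζ : 0 < ζ) (k j : ℕ) :
    ζ ^ (2 * j) * (Real.sqrt (z * ζ) * (ζ / z) ^ b * (z * ζ / τ / 2) ^ (2 * (k : ℝ) + (b - 1 / 2))) =
      z ^ (2 * k) / (2 * τ) ^ (2 * (k : ℝ) + (b - 1 / 2)) *
        ζ ^ (2 * ((k : ℝ) + (b - 1 / 2) + j) + 1) := by
  obtain ⟨x, rfl⟩ : ∃ x, z = Real.exp x := ⟨Real.log z, (Real.exp_log hz).symm⟩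
  obtain ⟨y, rfl⟩ : ∃ x, ζ = Real.exp x := ⟨Real.log ζ, (Real.exp_log hζ).symm⟩
  obtain ⟨t, ht⟩ : ∃ t, 2 * τ = Real.exp t := ⟨Real.log (2 * τ), (Real.exp_log (by positivity)).symm⟩
  have h1 : Real.exp x * Real.exp y / τ / 2 = Real.exp (x + y - t) := by
    rw [Real.exp_sub, Real.exp_add, ← ht]; field_simp
  rw [h1, ht, Real.sqrt_eq_rpow, ← Real.exp_add, ← Real.exp_sub, ← Real.exp_nat_mul,
    ← Real.exp_nat_mul]
  simp only [← Real.exp_mul, ← Real.exp_add, ← Real.exp_sub]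
  congr 1
  push_cast
  ring

lemma aux_step (l S : ℝ) (f : ℕ → ℝ)
    (h : HasSum (fun k : ℕ => l ^ k / (Nat.factorial k : ℝ) * f (k + 1)) S) :
    HasSum (fun k : ℕ => l ^ k / (Nat.factorial k : ℝ) * (k * f k)) (l * S) := by
  rw [← hasSum_nat_add_iff' 1]
  simp only [Finset.range_one, Finset.sum_singleton, Nat.cast_zero, zero_mul, mul_zero, sub_zero]
  refine (h.mul_left l).congr_fun fun k => ?_
  rw [Nat.factorial_succ]
  push_cast
  have : (k : ℝ) + 1 ≠ 0 := by positivity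
  field_simp
  ring

lemma aux_p0 (l : ℝ) : HasSum (fun k : ℕ => l ^ k / (Nat.factorial k : ℝ)) (Real.exp l) := by
  rw [Real.exp_eq_exp_ℝ]
  exact NormedSpace.expSeries_div_hasSum_exp l

lemma aux_p1 (l : ℝ) :
    HasSum (fun k : ℕ => l ^ k / (Nat.factorial k : ℝ) * k) (l * Real.exp l) := by
  simpa using aux_step l (Real.exp l) (fun _ => 1) (by simpa using aux_p0 l)

lemma aux_p2 (l : ℝ) :
    HasSum (fun k : ℕ => l ^ k / (Nat.factorial k : ℝ) * (k * k))
      (l * (l * Real.exp l + Real.exp l)) := by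
  refine aux_step l _ (fun k => (k : ℝ)) ?_
  convert (aux_p1 l).add (aux_p0 l) using 2 with k
  push_cast
  ring

open MeasureTheory in
lemma aux_moment (b τ z : ℝ) (hb : 1 / 2 ≤ b) (hτ : 0 < τ) (hz : 0 < z) (j : ℕ) (S : ℝ)
    (hS : HasSum (fun k : ℕ => (z ^ 2 / (2 * τ)) ^ k / (Nat.factorial k : ℝ) *
      (Real.Gamma ((k : ℝ) + (b - 1 / 2) + 1 + j) / Real.Gamma ((k : ℝ) + (b - 1 / 2) + 1))) S) :
    ∫ ζ in Set.Ioi (0 : ℝ), ζ ^ (2 * j) * besselKernel b τ z ζ =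
      Real.exp (-(z ^ 2 / (2 * τ))) * (2 * τ) ^ j * S := by
  set A : ℕ → ℝ := fun k => Real.exp (-(z ^ 2 / (2 * τ))) / τ *
    (z ^ (2 * k) / (2 * τ) ^ (2 * (k : ℝ) + (b - 1 / 2))) /
      ((Nat.factorial k : ℝ) * Real.Gamma ((k : ℝ) + (b - 1 / 2) + 1)) with hA
  set F : ℕ → ℝ → ℝ := fun k ζ => A k * (ζ ^ (2 * ((k : ℝ) + (b - 1 / 2) + j) + 1) *
    Real.exp (-(1 / (2 * τ)) * ζ ^ (2 : ℝ))) with hF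
  have hG : ∀ k : ℕ, 0 < Real.Gamma ((k : ℝ) + (b - 1 / 2) + 1) := fun k =>
    Real.Gamma_pos_of_pos (by have : (0 : ℝ) ≤ k := k.cast_nonneg
                              linarith)
  have hq : ∀ k : ℕ, -1 < 2 * ((k : ℝ) + (b - 1 / 2) + j) + 1 := fun k => by
    have : (0 : ℝ) ≤ k := k.cast_nonneg
    have : (0 : ℝ) ≤ j := j.cast_nonneg
    linarith
  have hA0 : ∀ k, 0 ≤ A k := fun k => by
    have := hG k
    simp only [hA]
    positivity
  have hpt : ∀ ζ ∈ Set.Ioi (0 : ℝ), ζ ^ (2 * j) * besselKernel b τ z ζ = ∑' k, F k ζ := by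
    intro ζ hζ
    have hζ : 0 < ζ := hζ
    unfold besselKernel besselI
    rw [← tsum_mul_left, ← tsum_mul_left]
    refine tsum_congr fun k => ?_
    have h1 := aux_pow_identity b τ z ζ hτ hz hζ k j
    have h2 : Real.exp (-(z ^ 2 + ζ ^ 2) / (2 * τ)) =
        Real.exp (-(z ^ 2 / (2 * τ))) * Real.exp (-(1 / (2 * τ)) * ζ ^ (2 : ℝ)) := by
      rw [← Real.exp_add, Real.rpow_two]
      congr 1
      field_simp
      ring
    rw [h2]
    simp only [hF, hA]
    calc _ = (ζ ^ (2 * j) * (Real.sqrt (z * ζ) * (ζ / z) ^ b *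
            (z * ζ / τ / 2) ^ (2 * (k : ℝ) + (b - 1 / 2)))) *
            (Real.exp (-(z ^ 2 / (2 * τ))) * Real.exp (-(1 / (2 * τ)) * ζ ^ (2 : ℝ)) / τ /
            ((Nat.factorial k : ℝ) * Real.Gamma ((k : ℝ) + (b - 1 / 2) + 1))) := by ring
      _ = _ := by rw [h1]; ring
  have hint : ∀ k, Integrable (F k) (volume.restrict (Set.Ioi 0)) := fun k =>
    (integrableOn_rpow_mul_exp_neg_mul_rpow (hq k) two_pos (by positivity)).const_mul _
  have hval : ∀ k, ∫ ζ in Set.Ioi (0 : ℝ), F k ζ =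
      Real.exp (-(z ^ 2 / (2 * τ))) * (2 * τ) ^ j * ((z ^ 2 / (2 * τ)) ^ k / (Nat.factorial k : ℝ) *
      (Real.Gamma ((k : ℝ) + (b - 1 / 2) + 1 + j) /
        Real.Gamma ((k : ℝ) + (b - 1 / 2) + 1))) := by
    intro k
    simp only [hF]
    rw [integral_const_mul, integral_rpow_mul_exp_neg_mul_rpow two_pos (hq k) (by positivity)]
    have e1 : (2 * ((k : ℝ) + (b - 1 / 2) + j) + 1 + 1) / 2 = (k : ℝ) + (b - 1 / 2) + 1 + j := by ring
    have e2 : -(2 * ((k : ℝ) + (b - 1 / 2) + j) + 1 + 1) / 2 =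
        -((2 * (k : ℝ) + (b - 1 / 2)) + 1 + j - k) := by ring
    have h2τ : 0 < 2 * τ := by positivity
    rw [e1, e2, one_div (2 * τ), Real.inv_rpow h2τ.le, Real.rpow_neg h2τ.le, inv_inv,
      Real.rpow_sub h2τ, Real.rpow_add h2τ, Real.rpow_add h2τ, Real.rpow_one,
      Real.rpow_natCast, Real.rpow_natCast]
    simp only [hA]
    have := (hG k).ne'
    have h3 : (2 * τ) ^ (2 * (k : ℝ) + (b - 1 / 2)) ≠ 0 := (Real.rpow_pos_of_pos h2τ _).ne'
    generalize (2 * τ) ^ (2 * (k : ℝ) + (b - 1 / 2)) = P at *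
    generalize Real.Gamma ((k : ℝ) + (b - 1 / 2) + 1) = G at *
    rw [div_pow, ← pow_mul]
    field_simp
  have hnorm : ∀ k, ∫ ζ in Set.Ioi (0 : ℝ), ‖F k ζ‖ = ∫ ζ in Set.Ioi (0 : ℝ), F k ζ := by
    intro k
    refine setIntegral_congr_fun measurableSet_Ioi fun ζ hζ => ?_
    have hζ : 0 < ζ := hζ
    have := hA0 k
    exact Real.norm_of_nonneg (by simp only [hF]; positivity)
  have hS' := hS.mul_left (Real.exp (-(z ^ 2 / (2 * τ))) * (2 * τ) ^ j)
  have key := hasSum_integral_of_summable_integral_norm hint (by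
    simp only [hnorm, hval]; exact hS'.summable)
  rw [setIntegral_congr_fun measurableSet_Ioi hpt]
  simp only [hval] at key
  exact key.unique hS'

open MeasureTheory in
lemma aux_moments (b τ z : ℝ) (hb : 1 / 2 ≤ b) (hτ : 0 < τ) (hz : 0 < z) :
    (∫ ζ in Set.Ioi (0 : ℝ), besselKernel b τ z ζ = 1) ∧
    (∫ ζ in Set.Ioi (0 : ℝ), ζ ^ 2 * besselKernel b τ z ζ = z ^ 2 + 2 * τ * (b + 1 / 2)) ∧
    (∫ ζ in Set.Ioi (0 : ℝ), ζ ^ 4 * besselKernel b τ z ζ =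
      z ^ 4 + 2 * τ * z ^ 2 * (2 * b + 3) + 4 * τ ^ 2 * (b + 1 / 2) * (b + 3 / 2)) := by
  have hp : ∀ k : ℕ, 0 < (k : ℝ) + (b - 1 / 2) + 1 := fun k => by
    have : (0 : ℝ) ≤ k := k.cast_nonneg
    linarith
  have hG : ∀ k : ℕ, Real.Gamma ((k : ℝ) + (b - 1 / 2) + 1) ≠ 0 := fun k =>
    (Real.Gamma_pos_of_pos (hp k)).ne'
  have hE : Real.exp (-(z ^ 2 / (2 * τ))) * Real.exp (z ^ 2 / (2 * τ)) = 1 := by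
    rw [← Real.exp_add]; simp
  set l := z ^ 2 / (2 * τ) with hl
  have hlz : z ^ 2 = 2 * τ * l := by rw [hl]; field_simp
  refine ⟨?_, ?_, ?_⟩
  · have := aux_moment b τ z hb hτ hz 0 (Real.exp l) (by
      convert aux_p0 l using 2 with k
      rw [Nat.cast_zero, add_zero, div_self (hG k), mul_one, ← hl])
    simpa [← hl, hE] using this
  · have := aux_moment b τ z hb hτ hz 1 (l * Real.exp l + (b + 1 / 2) * Real.exp l) (by
      convert (aux_p1 l).add ((aux_p0 l).mul_left (b + 1 / 2)) using 2 with k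
      rw [Nat.cast_one, Real.Gamma_add_one (hp k).ne', mul_div_assoc, div_self (hG k), ← hl]
      ring)
    rw [mul_one] at this
    rw [this, ← hl, hlz]
    linear_combination (2 * τ * (l + (b + 1 / 2))) * hE
  · have := aux_moment b τ z hb hτ hz 2 (l * (l * Real.exp l + Real.exp l) +
        (2 * b + 2) * (l * Real.exp l) + (b + 1 / 2) * (b + 3 / 2) * Real.exp l) (by
      convert ((aux_p2 l).add ((aux_p1 l).mul_left (2 * b + 2))).add
        ((aux_p0 l).mul_left ((b + 1 / 2) * (b + 3 / 2))) using 2 with k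
      have e : (k : ℝ) + (b - 1 / 2) + 1 + (2 : ℕ) = (k : ℝ) + (b - 1 / 2) + 1 + 1 + 1 := by
        push_cast; ring
      have h1 := hp k
      rw [e, Real.Gamma_add_one (by positivity), Real.Gamma_add_one (hp k).ne', ← mul_assoc,
        mul_div_assoc, div_self (hG k), ← hl]
      ring)
    norm_num only at this
    rw [show z ^ 4 = (z ^ 2) ^ 2 by ring, this, ← hl, hlz]
    linear_combination (4 * τ ^ 2 * (l * (l + 1) + (2 * b + 2) * l +
      (b + 1 / 2) * (b + 3 / 2))) * hE

lemma aux_nonneg (b τ z ζ : ℝ) (hb : 1 / 2 ≤ b) (hτ : 0 < τ) (hz : 0 < z) (hζ : 0 < ζ) :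
    0 ≤ besselKernel b τ z ζ := by
  have : 0 ≤ besselI (b - 1 / 2) (z * ζ / τ) := by
    unfold besselI
    refine tsum_nonneg fun k => ?_
    have : 0 < Real.Gamma ((k : ℝ) + (b - 1 / 2) + 1) :=
      Real.Gamma_pos_of_pos (by have : (0 : ℝ) ≤ k := k.cast_nonneg
                                linarith)
    positivity
  unfold besselKernel
  positivity

open MeasureTheory in
lemma aux_main (b τ z : ℝ) (hb : 1 / 2 ≤ b) (hτ : 0 < τ) (hz : 0 < z) (u : ℝ → ℝ)
    (hu : ContinuousOn u (Set.Ioi 0)) (M : ℝ) (hM : ∀ ζ ∈ Set.Ioi (0 : ℝ), |u ζ| ≤ M)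
    (ε C : ℝ) (h : ∀ ζ ∈ Set.Ioi (0 : ℝ), |u ζ - u z| ≤ ε + C * (ζ ^ 2 - z ^ 2) ^ 2) :
    |(∫ ζ in Set.Ioi (0 : ℝ), u ζ * besselKernel b τ z ζ) - u z| ≤
      ε + C * (4 * τ * z ^ 2 + 4 * τ ^ 2 * (b + 1 / 2) * (b + 3 / 2)) := by
  obtain ⟨m0, m1, m2⟩ := aux_moments b τ z hb hτ hz
  have hI : ∀ f : ℝ → ℝ, 0 < ∫ ζ in Set.Ioi (0 : ℝ), f ζ →
      Integrable f (volume.restrict (Set.Ioi 0)) := fun f hf => by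
    by_contra hc
    rw [integral_undef hc] at hf
    exact lt_irrefl _ hf
  have i0 := hI _ (by rw [m0]; norm_num)
  have i1 := hI _ (by rw [m1]; positivity)
  have i2 := hI _ (by rw [m2]; positivity)
  have iu : Integrable (fun ζ => u ζ * besselKernel b τ z ζ) (volume.restrict (Set.Ioi 0)) :=
    i0.bdd_mul (hu.aestronglyMeasurable measurableSet_Ioi)
      ((ae_restrict_iff' measurableSet_Ioi).2 (Filter.Eventually.of_forall hM))
  have e1 : (∫ ζ in Set.Ioi (0 : ℝ), u ζ * besselKernel b τ z ζ) - u z =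
      ∫ ζ in Set.Ioi (0 : ℝ), (u ζ * besselKernel b τ z ζ - u z * besselKernel b τ z ζ) := by
    rw [integral_sub iu (i0.const_mul _), integral_const_mul, m0, mul_one]
  have ib : Integrable (fun ζ => (ε + C * z ^ 4) * besselKernel b τ z ζ +
      (-2 * C * z ^ 2) * (ζ ^ 2 * besselKernel b τ z ζ) + C * (ζ ^ 4 * besselKernel b τ z ζ))
      (volume.restrict (Set.Ioi 0)) :=
    ((i0.const_mul _).add (i1.const_mul _)).add (i2.const_mul _)
  have e2 : ∫ ζ in Set.Ioi (0 : ℝ), ((ε + C * z ^ 4) * besselKernel b τ z ζ +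
      (-2 * C * z ^ 2) * (ζ ^ 2 * besselKernel b τ z ζ) + C * (ζ ^ 4 * besselKernel b τ z ζ)) =
      ε + C * (4 * τ * z ^ 2 + 4 * τ ^ 2 * (b + 1 / 2) * (b + 3 / 2)) := by
    have i01 : Integrable (fun ζ => (ε + C * z ^ 4) * besselKernel b τ z ζ +
        (-2 * C * z ^ 2) * (ζ ^ 2 * besselKernel b τ z ζ)) (volume.restrict (Set.Ioi 0)) :=
      (i0.const_mul _).add (i1.const_mul _)
    rw [integral_add i01 (i2.const_mul _),
      integral_add (i0.const_mul _) (i1.const_mul _), integral_const_mul, integral_const_mul,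
      integral_const_mul, m0, m1, m2]
    ring
  rw [e1, ← e2, ← Real.norm_eq_abs]
  refine norm_integral_le_of_norm_le ib ((ae_restrict_iff' measurableSet_Ioi).2
    (Filter.Eventually.of_forall fun ζ hζ => ?_))
  have hk := aux_nonneg b τ z ζ hb hτ hz hζ
  rw [← sub_mul, norm_mul, Real.norm_of_nonneg hk, Real.norm_eq_abs]
  calc _ ≤ (ε + C * (ζ ^ 2 - z ^ 2) ^ 2) * besselKernel b τ z ζ :=
        mul_le_mul_of_nonneg_right (h ζ hζ) hk
    _ = _ := by ring

/-- the superposition integral of bounded continuous initial data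
against the Bessel heat kernel recovers the initial data as `τ → 0⁺`:
`lim_{τ→0⁺} ∫_0^∞ u₀(ζ)q_τ(z,ζ,b)dζ = u₀(z)` for every `z > 0`. -/
theorem bessel_superposition_initial_condition
    (b : ℝ) (hb : 1 / 2 ≤ b)
    (u₀ : ℝ → ℝ)
    (hu₀cont : ContinuousOn u₀ (Set.Ioi 0))
    (hu₀bdd : ∃ M : ℝ, ∀ ζ ∈ Set.Ioi (0 : ℝ), |u₀ ζ| ≤ M)
    (z : ℝ) (hz : 0 < z) :
    Filter.Tendsto (fun τ => ∫ ζ in Set.Ioi (0 : ℝ), u₀ ζ * besselKernel b τ z ζ)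
      (nhdsWithin 0 (Set.Ioi 0)) (nhds (u₀ z)) := by
  obtain ⟨M, hM⟩ := hu₀bdd
  rw [Metric.tendsto_nhds]
  intro ε hε
  obtain ⟨δ, hδ, hδ'⟩ := Metric.continuousAt_iff.1
    (hu₀cont.continuousAt (Ioi_mem_nhds hz)) (ε / 2) (half_pos hε)
  have hM0 : 0 ≤ M := (abs_nonneg _).trans (hM z hz)
  have hbound : ∀ ζ ∈ Set.Ioi (0 : ℝ),
      |u₀ ζ - u₀ z| ≤ ε / 2 + (2 * M / (δ * z) ^ 2) * (ζ ^ 2 - z ^ 2) ^ 2 := by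
    intro ζ hζ
    have hζ' : 0 < ζ := hζ
    by_cases hd : |ζ - z| < δ
    · have := hδ' (x := ζ) (by rwa [Real.dist_eq])
      rw [Real.dist_eq] at this
      have : 0 ≤ (2 * M / (δ * z) ^ 2) * (ζ ^ 2 - z ^ 2) ^ 2 := by positivity
      linarith
    · push Not at hd
      have h1 : |u₀ ζ - u₀ z| ≤ 2 * M := by
        have := abs_sub (u₀ ζ) (u₀ z)
        have := hM ζ hζ
        have := hM z hz
        linarith
      have h2 : (δ * z) ^ 2 ≤ (ζ ^ 2 - z ^ 2) ^ 2 := by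
        rw [← sq_abs (ζ ^ 2 - z ^ 2)]
        have : δ * z ≤ |ζ ^ 2 - z ^ 2| := by
          rw [show ζ ^ 2 - z ^ 2 = (ζ - z) * (ζ + z) by ring, abs_mul,
            abs_of_pos (add_pos hζ' hz)]
          exact mul_le_mul hd (by linarith) hz.le (abs_nonneg _)
        exact pow_le_pow_left₀ (by positivity) this 2
      have h3 : 2 * M ≤ (2 * M / (δ * z) ^ 2) * (ζ ^ 2 - z ^ 2) ^ 2 := by
        rw [div_mul_eq_mul_div, le_div_iff₀ (by positivity)]
        exact mul_le_mul_of_nonneg_left h2 (by positivity)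
      linarith
  set C := 2 * M / (δ * z) ^ 2
  have hlim : Filter.Tendsto (fun τ : ℝ => ε / 2 +
      C * (4 * τ * z ^ 2 + 4 * τ ^ 2 * (b + 1 / 2) * (b + 3 / 2)))
      (nhdsWithin 0 (Set.Ioi 0)) (nhds (ε / 2)) := by
    have hc : Continuous (fun τ : ℝ => ε / 2 +
      C * (4 * τ * z ^ 2 + 4 * τ ^ 2 * (b + 1 / 2) * (b + 3 / 2))) := by fun_prop
    have := hc.tendsto 0
    simp only [ne_eq, OfNat.ofNat_ne_zero, not_false_eq_true, zero_pow, mul_zero, zero_mul,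
      add_zero] at this
    exact this.mono_left nhdsWithin_le_nhds
  filter_upwards [hlim.eventually (gt_mem_nhds (half_lt_self hε)), self_mem_nhdsWithin] with τ h1 hτ
  rw [Real.dist_eq]
  exact (aux_main b τ z hb hτ hz u₀ hu₀cont M hM (ε / 2) C hbound).trans_lt h1
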